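/- arXiv:1012.1919 — 2 statements merged into one kernel-verified Lean document; each statement's English description precedes it below -/
import Mathlib

section
/- Let A be a real m×n matrix with singular value decomposition A = U Σ Vᵀ, where U is an m×m orthogonal matrix, V is an n×n orthogonal matrix, and Σ is an m×n matrix with Σ_{ij} = 0 for i ≠ j and Σ_{ii} = σ_i ≥ 0. Let Σ_m be the m×m diagonal matrix and Σ_n the n×n diagonal matrix whose i-th diagonal entry equals σ_i when i < min(m,n) and 0 otherwise. Then, setting Y = U Σ_m Uᵀ and Z = V Σ_n Vᵀ, the block matrix [[Y, A],[Aᵀ, Z]] is positive semidefinite and (1/2)(tr Y + tr Z) = Σ_i σ_i. -/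
open Matrix

/-! With `p = min m n`, only the first `p` columns `Uₚ`, `Vₚ` of `U`, `V` matter: for
`D = diag(σ₀, …, σₚ₋₁)` one has `Y = Uₚ D Uₚᵀ`, `A = Uₚ D Vₚᵀ` and `Z = Vₚ D Vₚᵀ`. The block matrix
is therefore the congruence `[Uₚ; Vₚ] D [Uₚ; Vₚ]ᵀ` of `D ≥ 0`, and since `Uₚ`, `Vₚ` have orthonormal
columns, both `Y` and `Z` have the trace of `D`. -/

section CongruenceFactorization

variable {l m n R : Type*}

theorem posSemidef_fromBlocks_mul_mul_conjTranspose [Fintype l] [Finite m] [Finite n]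
    [Ring R] [PartialOrder R] [StarRing R] {D : Matrix l l R} (hD : D.PosSemidef)
    (B : Matrix m l R) (C : Matrix n l R) :
    (fromBlocks (B * D * Bᴴ) (B * D * Cᴴ) (B * D * Cᴴ)ᴴ (C * D * Cᴴ)).PosSemidef := by
  have hCB : (B * D * Cᴴ)ᴴ = C * D * Bᴴ := by
    simp only [conjTranspose_mul, conjTranspose_conjTranspose, hD.isHermitian.eq, Matrix.mul_assoc]
  rw [hCB, ← fromRows_mul_fromCols, ← fromRows_mul,
    ← conjTranspose_fromRows_eq_fromCols_conjTranspose]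
  exact hD.mul_mul_conjTranspose_same (fromRows B C)

theorem trace_mul_mul_conjTranspose_eq_trace [Fintype l] [DecidableEq l] [Fintype m]
    [CommSemiring R] [Star R] {B : Matrix m l R} (hB : Bᴴ * B = 1) (D : Matrix l l R) :
    (B * D * Bᴴ).trace = D.trace := by
  rw [trace_mul_cycle, hB, Matrix.one_mul]

theorem conjTranspose_submatrix_mul_submatrix_eq_one [DecidableEq l] [DecidableEq n] [Fintype m]
    [NonAssocSemiring R] [Star R] {U : Matrix m n R} (hU : Uᴴ * U = 1) {f : l → n}
    (hf : Function.Injective f) : (U.submatrix id f)ᴴ * U.submatrix id f = 1 := by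
  rw [conjTranspose_submatrix, ← submatrix_mul _ _ f id f Function.bijective_id, hU,
    submatrix_one f hf]

end CongruenceFactorization

section RectangularDiagonal

variable {R : Type*}

theorem mul_sum_single_mul {k l m n o : Type*} [Fintype l] [DecidableEq l] [Fintype m]
    [DecidableEq m] [Fintype n] [DecidableEq n] [Semiring R] (f : l → m) (g : l → n) (d : l → R)
    (U : Matrix k m R) (W : Matrix n o R) :
    U * (∑ i, single (f i) (g i) (d i)) * W =
      U.submatrix id f * diagonal d * W.submatrix g id := by
  ext a b
  rw [Matrix.mul_sum, Matrix.sum_mul, Matrix.sum_apply, Matrix.mul_apply]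
  refine Finset.sum_congr rfl fun i _ => ?_
  rw [mul_diagonal]
  simp [Matrix.mul_apply, single_apply, ite_and]

theorem sum_single_castLE_apply [AddCommMonoid R] {p q r : ℕ} (hq : p ≤ q) (hr : p ≤ r)
    (σ : ℕ → R) (i : Fin q) (j : Fin r) :
    (∑ k : Fin p, single (k.castLE hq) (k.castLE hr) (σ k)) i j =
      if (i : ℕ) = j ∧ (i : ℕ) < p then σ i else 0 := by
  simp only [Matrix.sum_apply, single_apply, Fin.ext_iff, Fin.val_castLE]
  rw [Fin.sum_univ_eq_sum_range (fun k => if k = (i : ℕ) ∧ k = j then σ k else 0)]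
  simp only [ite_and, Finset.sum_ite_eq', Finset.mem_range]
  grind

theorem mul_mul_eq_submatrix_castLE_mul_diagonal_mul {k o : Type*} [Semiring R] {p q r : ℕ}
    (hq : p ≤ q) (hr : p ≤ r) {S : Matrix (Fin q) (Fin r) R} {σ : ℕ → R}
    (hS : ∀ i j, S i j = if (i : ℕ) = j ∧ (i : ℕ) < p then σ i else 0)
    (U : Matrix k (Fin q) R) (W : Matrix (Fin r) o R) :
    U * S * W = U.submatrix id (Fin.castLE hq) * diagonal (fun i : Fin p => σ i) *
      W.submatrix (Fin.castLE hr) id := by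
  have hS_sum : S = ∑ i : Fin p, single (i.castLE hq) (i.castLE hr) (σ i) := by
    ext i j
    rw [hS, sum_single_castLE_apply]
  rw [hS_sum, mul_sum_single_mul]

end RectangularDiagonal

theorem svd_block_posSemidef_and_trace_general {R : Type*} [CommRing R] [PartialOrder R]
    [StarRing R] [StarOrderedRing R] {m n : ℕ} (A : Matrix (Fin m) (Fin n) R)
    (U : Matrix (Fin m) (Fin m) R) (V : Matrix (Fin n) (Fin n) R)
    (S : Matrix (Fin m) (Fin n) R) (σ : ℕ → R)
    (hU : Uᴴ * U = 1) (hV : Vᴴ * V = 1) (hA : A = U * S * Vᴴ)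
    (hS_off : ∀ (i : Fin m) (j : Fin n), (i : ℕ) ≠ (j : ℕ) → S i j = 0)
    (hS_diag : ∀ (i : Fin m) (j : Fin n), (i : ℕ) = (j : ℕ) → S i j = σ (i : ℕ))
    (hσ : ∀ k < min m n, 0 ≤ σ k) :
    let Sm : Matrix (Fin m) (Fin m) R :=
      diagonal fun i => if (i : ℕ) < min m n then σ (i : ℕ) else 0
    let Sn : Matrix (Fin n) (Fin n) R :=
      diagonal fun i => if (i : ℕ) < min m n then σ (i : ℕ) else 0
    let Y := U * Sm * Uᴴ
    let Z := V * Sn * Vᴴ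
    (fromBlocks Y A Aᴴ Z).PosSemidef ∧
      Y.trace = ∑ i ∈ Finset.range (min m n), σ i ∧
      Z.trace = ∑ i ∈ Finset.range (min m n), σ i := by
  intro Sm Sn Y Z
  have hm : min m n ≤ m := min_le_left m n
  have hn : min m n ≤ n := min_le_right m n
  let Uₚ := U.submatrix id (Fin.castLE hm)
  let Vₚ := V.submatrix id (Fin.castLE hn)
  let D := diagonal fun i : Fin (min m n) => σ i
  have hY : Y = Uₚ * D * Uₚᴴ := mul_mul_eq_submatrix_castLE_mul_diagonal_mul hm hm
    (fun i j => by simp only [Sm, diagonal_apply, Fin.ext_iff, ite_and]) U Uᴴ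
  have hZ : Z = Vₚ * D * Vₚᴴ := mul_mul_eq_submatrix_castLE_mul_diagonal_mul hn hn
    (fun i j => by simp only [Sn, diagonal_apply, Fin.ext_iff, ite_and]) V Vᴴ
  have hA_thin : A = Uₚ * D * Vₚᴴ := hA.trans <|
    mul_mul_eq_submatrix_castLE_mul_diagonal_mul hm hn (fun i j => by grind) U Vᴴ
  have hD : D.PosSemidef := .diagonal fun i => hσ i i.isLt
  have hD_trace : D.trace = ∑ i ∈ Finset.range (min m n), σ i := by
    rw [trace_diagonal, Finset.sum_range]
  rw [hY, hZ, hA_thin, ← hD_trace]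
  exact ⟨posSemidef_fromBlocks_mul_mul_conjTranspose hD Uₚ Vₚ,
    trace_mul_mul_conjTranspose_eq_trace
      (conjTranspose_submatrix_mul_submatrix_eq_one hU (Fin.castLE_injective hm)) D,
    trace_mul_mul_conjTranspose_eq_trace
      (conjTranspose_submatrix_mul_submatrix_eq_one hV (Fin.castLE_injective hn)) D⟩

/-- Given an SVD `A = U * S * Vᵀ` of a real `m × n` matrix (with `U`, `V`
orthogonal and `S` nonnegative "diagonal" with diagonal entries `σ i`), setting
`Y = U Σₘ Uᵀ` and `Z = V Σₙ Vᵀ` — where `Σₘ`, `Σₙ` are square diagonal matrices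
carrying the singular values — the block matrix `[[Y, A], [Aᵀ, Z]]` is positive
semidefinite and `(1/2)(tr Y + tr Z)` equals the sum of the singular values. -/
theorem svd_block_posSemidef_and_trace {m n : ℕ}
    (A : Matrix (Fin m) (Fin n) ℝ)
    (U : Matrix (Fin m) (Fin m) ℝ) (V : Matrix (Fin n) (Fin n) ℝ)
    (S : Matrix (Fin m) (Fin n) ℝ) (σ : ℕ → ℝ)
    (hU : Uᵀ * U = 1) (hV : Vᵀ * V = 1)
    (hA : A = U * S * Vᵀ)
    (hS_off : ∀ (i : Fin m) (j : Fin n), (i : ℕ) ≠ (j : ℕ) → S i j = 0)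
    (hS_diag : ∀ (i : Fin m) (j : Fin n), (i : ℕ) = (j : ℕ) → S i j = σ (i : ℕ))
    (hσ : ∀ k, 0 ≤ σ k) :
    let Sm : Matrix (Fin m) (Fin m) ℝ :=
      Matrix.diagonal fun i => if (i : ℕ) < min m n then σ (i : ℕ) else 0
    let Sn : Matrix (Fin n) (Fin n) ℝ :=
      Matrix.diagonal fun i => if (i : ℕ) < min m n then σ (i : ℕ) else 0
    let Y := U * Sm * Uᵀ
    let Z := V * Sn * Vᵀ
    (Matrix.fromBlocks Y A Aᵀ Z).PosSemidef ∧
      (1 / 2) * (Y.trace + Z.trace) = ∑ i ∈ Finset.range (min m n), σ i := by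
  simp only [← conjTranspose_eq_transpose_of_trivial] at hU hV hA ⊢
  obtain ⟨h_pos, hY, hZ⟩ :=
    svd_block_posSemidef_and_trace_general A U V S σ hU hV hA hS_off hS_diag fun k _ => hσ k
  exact ⟨h_pos, by rw [hY, hZ]; ring⟩
end

section
/- (Successive iterates converge together.) Let d ≥ 1, let M : ℝ^d → ℝ^d and H : ℝ^d → ℝ be continuous maps such that H(M(x)) ≤ H(x) for every x ∈ ℝ^d, and H(M(x)) < H(x) whenever M(x) ≠ x. Let x_0 ∈ ℝ^d and define x_{t+1} = M(x_t) for all t ∈ ℕ. If the sequence (x_t) is bounded, then ‖x_{t+1} − x_t‖ → 0 as t → ∞. -/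
/-!
A cluster point `a` of the orbit is a fixed point of `M`: since `H` decreases along the orbit,
`H a` is a lower bound for all the values `H (x t)`, hence also for their cluster value `H (M a)`,
and this excludes `H (M a) < H a`. A relatively compact orbit approaches its set of cluster points,
and near a fixed point `M` moves points very little.
-/

open Filter Function Set Topology Uniformity

section Lyapunov

variable {X α : Type*} [Preorder α] {M : X → X} {H : X → α} {x : ℕ → X} {a : X}

theorem antitone_orbit_of_lt_of_ne (hstrict : ∀ y, M y ≠ y → H (M y) < H y)
    (hrec : ∀ t, x (t + 1) = M (x t)) : Antitone fun t => H (x t) := by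
  refine antitone_nat_of_succ_le fun t => ?_
  rw [hrec]
  by_cases hfix : M (x t) = x t
  · rw [hfix]
  · exact (hstrict _ hfix).le

variable [TopologicalSpace α]

theorem le_of_antitone_of_mapClusterPt {ι : Type*} [Preorder ι] [ClosedIicTopology α]
    {u : ι → α} {c : α} (hu : Antitone u) (hc : MapClusterPt c atTop u) (i : ι) : c ≤ u i :=
  isClosed_Iic.mem_of_mapClusterPt hc ((eventually_ge_atTop i).mono fun _ hij => hu hij)

variable [TopologicalSpace X] [OrderClosedTopology α]

theorem le_map_of_mapClusterPt_orbit (hM : ContinuousAt M a) (hHa : ContinuousAt H a)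
    (hHMa : ContinuousAt H (M a)) (hrec : ∀ t, x (t + 1) = M (x t))
    (hanti : Antitone fun t => H (x t)) (ha : MapClusterPt a atTop x) : H a ≤ H (M a) := by
  have hlower : ∀ t, H a ≤ H (x t) :=
    le_of_antitone_of_mapClusterPt hanti (ha.continuousAt_comp hHa)
  have hcluster : MapClusterPt (H (M a)) atTop (H ∘ M ∘ x) :=
    (ha.continuousAt_comp hM).continuousAt_comp hHMa
  refine isClosed_Ici.mem_of_mapClusterPt hcluster (Eventually.of_forall fun t => ?_)
  simpa only [comp_apply, mem_Ici, hrec] using hlower (t + 1)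

theorem isFixedPt_of_mapClusterPt_orbit (hM : ContinuousAt M a) (hHa : ContinuousAt H a)
    (hHMa : ContinuousAt H (M a)) (hstrict : ∀ y, M y ≠ y → H (M y) < H y)
    (hrec : ∀ t, x (t + 1) = M (x t)) (ha : MapClusterPt a atTop x) : IsFixedPt M a := by
  by_contra hne
  have hanti := antitone_orbit_of_lt_of_ne hstrict hrec
  exact (hstrict a hne).not_ge (le_map_of_mapClusterPt_orbit hM hHa hHMa hrec hanti ha)

end Lyapunov

theorem tendsto_map_prodMk_nhdsSet_fixedPoints_uniformity {X : Type*} [UniformSpace X] {M : X → X}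
    (hM : Continuous M) : Tendsto (fun a => (M a, a)) (𝓝ˢ (fixedPoints M)) (𝓤 X) :=
  ((hM.prodMk continuous_id).tendsto_nhdsSet fun _ hfix => hfix).mono_right
    nhdsSet_diagonal_le_uniformity

theorem mm_successive_iterates_tendsto_zero_general {X α : Type*} [UniformSpace X]
    [TopologicalSpace α] [Preorder α] [OrderClosedTopology α] {M : X → X} {H : X → α}
    {x : ℕ → X} {K : Set X} (hM : Continuous M) (hH : Continuous H)
    (hstrict : ∀ y, M y ≠ y → H (M y) < H y) (hrec : ∀ t, x (t + 1) = M (x t))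
    (hK : IsCompact K) (hxK : ∀ᶠ t in atTop, x t ∈ K) :
    Tendsto (fun t => (x (t + 1), x t)) atTop (𝓤 X) := by
  have hfixed : Tendsto x atTop (𝓝ˢ (fixedPoints M)) :=
    hK.tendsto_nhdsSet_of_mapClusterPt hxK fun _ _ ha =>
      isFixedPt_of_mapClusterPt_orbit hM.continuousAt hH.continuousAt hH.continuousAt
        hstrict hrec ha
  simpa only [comp_def, hrec] using
    (tendsto_map_prodMk_nhdsSet_fixedPoints_uniformity hM).comp hfixed

/-- Successive iterates of a continuous descent map converge together: if
`M : ℝᵈ → ℝᵈ` and `H : ℝᵈ → ℝ` are continuous, `H (M x) ≤ H x` everywhere with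
strict inequality whenever `M x ≠ x`, and the orbit `x_{t+1} = M (x_t)` is
bounded, then `‖x_{t+1} - x_t‖ → 0`. -/
theorem mm_successive_iterates_tendsto_zero {d : ℕ} (hd : 1 ≤ d)
    (M : EuclideanSpace ℝ (Fin d) → EuclideanSpace ℝ (Fin d))
    (H : EuclideanSpace ℝ (Fin d) → ℝ)
    (hM : Continuous M) (hH : Continuous H)
    (hdec : ∀ x, H (M x) ≤ H x)
    (hstrict : ∀ x, M x ≠ x → H (M x) < H x)
    (x : ℕ → EuclideanSpace ℝ (Fin d)) (x₀ : EuclideanSpace ℝ (Fin d))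
    (hx0 : x 0 = x₀)
    (hrec : ∀ t : ℕ, x (t + 1) = M (x t))
    (hbdd : ∃ C : ℝ, ∀ t : ℕ, ‖x t‖ ≤ C) :
    Filter.Tendsto (fun t : ℕ => ‖x (t + 1) - x t‖) Filter.atTop (nhds 0) := by
  obtain ⟨C, hC⟩ := hbdd
  have hmem : ∀ t, x t ∈ Metric.closedBall 0 C := fun t => mem_closedBall_zero_iff.2 (hC t)
  simpa only [dist_eq_norm] using tendsto_uniformity_iff_dist_tendsto_zero.1
    (mm_successive_iterates_tendsto_zero_general hM hH hstrict hrec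
      (isCompact_closedBall 0 C) (Eventually.of_forall hmem))
end
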